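/- Let T ∈ 𝒯 and suppose U ∈ 𝒯 satisfies the defining conditions for ∂T and has n elements. Then T has more than 2^{n−2} elements. In particular, if ∂T has n elements then |T| > 2^{n−2}. -/

import Mathlib

/-- The (strict) lexicographic order on finite binary sequences, with `false < true`. -/
def lexLt (u v : List Bool) : Prop := List.Lex (· < ·) u v

/-- `t` is an initial segment of the infinite binary sequence `x`. -/
def StreamPrefix (t : List Bool) (x : ℕ → Bool) : Prop :=
  ∀ i : Fin t.length, t.get i = x i

/-- `T` is a finite rooted binary tree, identified with the (finite) set of addresses of
its leaves: every infinite binary sequence has a unique initial segment in `T`. -/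
def IsTree (T : Finset (List Bool)) : Prop :=
  ∀ x : ℕ → Bool, ∃! t, t ∈ T ∧ StreamPrefix t x

/-- `U` is contained in `V`: every element of `U` has an extension in `V`. -/
def ContainedIn (U V : Finset (List Bool)) : Prop :=
  ∀ u ∈ U, ∃ v ∈ V, u <+: v

/-- `T/u = {s : u⌢s ∈ T}`. -/
def treeQuot (T : Finset (List Bool)) (u : List Bool) : Finset (List Bool) :=
  (T.filter (fun t => u <+: t)).image (fun t => t.drop u.length)

/-- `u` is an interior element of `T`: an element of `T` which is neither the
lexicographically least nor the lexicographically greatest element of `T`. -/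
def IsInterior (T : Finset (List Bool)) (u : List Bool) : Prop :=
  u ∈ T ∧ (∃ a ∈ T, lexLt a u) ∧ (∃ b ∈ T, lexLt u b)

/-- `U` satisfies the defining conditions for `∂T`: `U` is a tree contained in `T`;
(1) `U` contains extensions of both `⟨0,1⟩` and `⟨1,0⟩`;
(2) either `2|T/u| ≤ |T/v|` for all interior `u <_lex v` of `U`, or `2|T/v| ≤ |T/u|`
for all interior `u <_lex v` of `U`;
(3) the minimum interior element of `U` ends with `1` and the maximum interior element
of `U` ends with `0`. -/
def DefCondDT (T U : Finset (List Bool)) : Prop :=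
  IsTree U ∧ ContainedIn U T ∧
  (∃ u ∈ U, [false, true] <+: u) ∧ (∃ u ∈ U, [true, false] <+: u) ∧
  ((∀ u v, IsInterior U u → IsInterior U v → lexLt u v →
      2 * (treeQuot T u).card ≤ (treeQuot T v).card) ∨
   (∀ u v, IsInterior U u → IsInterior U v → lexLt u v →
      2 * (treeQuot T v).card ≤ (treeQuot T u).card)) ∧
  (∀ u, IsInterior U u → (∀ v, IsInterior U v → ¬ lexLt v u) → u.getLast? = some true) ∧
  (∀ u, IsInterior U u → (∀ v, IsInterior U v → ¬ lexLt u v) → u.getLast? = some false)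

/-!
The sets of elements of `T` extending the various `u ∈ U` are disjoint, so `|T| ≥ ∑ u ∈ U, |T/u|`.
Listed in increasing order, the `n - 2` sizes `|T/u|` at the interior elements at least double at
each step, starting from at least `1`, so they add up to at least `2 ^ (n - 2) - 1`; the two
endpoints contribute at least `1` each.
-/

section Doubling

variable {ι R : Type*} [Semiring R] [LinearOrder R] [IsStrictOrderedRing R]

theorem two_mul_le_of_le_of_doubling {x y : R} (hy : 0 < y) (hxy : x ≤ y)
    (hdouble : 2 * x ≤ y ∨ 2 * y ≤ x) : 2 * x ≤ y := by
  refine hdouble.resolve_right fun hyx ↦ ?_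
  have hlt : y < 2 * y := lt_mul_of_one_lt_left hy one_lt_two
  exact (hlt.trans_le (hyx.trans hxy)).false

variable {f : ι → R} {s : Finset ι}

theorem two_pow_card_le_of_pairwise_doubling (hf : ∀ i ∈ s, 1 ≤ f i)
    (hdouble : (s : Set ι).Pairwise fun i j ↦ 2 * f i ≤ f j ∨ 2 * f j ≤ f i)
    {m : R} (hm : 1 ≤ m) (hfm : ∀ i ∈ s, 2 * f i ≤ m) : 2 ^ s.card ≤ m := by
  classical
  induction s using Finset.induction_on_max_value f generalizing m with
  | empty => simpa using hm
  | insert a s ha hmax ih =>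
    rw [Finset.forall_mem_insert] at hf hfm
    rw [Finset.coe_insert, Set.pairwise_insert_of_notMem (by simpa using ha)] at hdouble
    have hfa : ∀ i ∈ s, 2 * f i ≤ f a := fun i hi ↦
      two_mul_le_of_le_of_doubling (one_pos.trans_le hf.1) (hmax i hi) (hdouble.2 i hi).2
    calc 2 ^ (insert a s).card = 2 * 2 ^ s.card := by
          rw [Finset.card_insert_of_notMem ha, pow_succ']
      _ ≤ 2 * f a := by gcongr; exact ih hf.2 hdouble.1 hf.1 hfa
      _ ≤ m := hfm.1

theorem two_pow_card_le_sum_add_one_of_pairwise_doubling (hf : ∀ i ∈ s, 1 ≤ f i)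
    (hdouble : (s : Set ι).Pairwise fun i j ↦ 2 * f i ≤ f j ∨ 2 * f j ≤ f i) :
    2 ^ s.card ≤ ∑ i ∈ s, f i + 1 := by
  classical
  induction s using Finset.induction_on_max_value f with
  | empty => simp
  | insert a s ha hmax ih =>
    rw [Finset.forall_mem_insert] at hf
    rw [Finset.coe_insert, Set.pairwise_insert_of_notMem (by simpa using ha)] at hdouble
    have hfa : ∀ i ∈ s, 2 * f i ≤ f a := fun i hi ↦
      two_mul_le_of_le_of_doubling (one_pos.trans_le hf.1) (hmax i hi) (hdouble.2 i hi).2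
    calc 2 ^ (insert a s).card = 2 ^ s.card + 2 ^ s.card := by
          rw [Finset.card_insert_of_notMem ha, pow_succ, mul_two]
      _ ≤ f a + (∑ i ∈ s, f i + 1) :=
          add_le_add (two_pow_card_le_of_pairwise_doubling hf.2 hdouble.1 hf.1 hfa)
            (ih hf.2 hdouble.1)
      _ = ∑ i ∈ insert a s, f i + 1 := by rw [Finset.sum_insert ha, add_assoc]

theorem two_pow_card_sub_two_lt_sum [DecidableEq ι] (hf : ∀ i ∈ s, 1 ≤ f i) {a b : ι}
    (ha : a ∈ s) (hb : b ∈ s) (hab : a ≠ b)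
    (hdouble : ((s \ {a, b} : Finset ι) : Set ι).Pairwise
      fun i j ↦ 2 * f i ≤ f j ∨ 2 * f j ≤ f i) :
    2 ^ (s.card - 2) < ∑ i ∈ s, f i := by
  have hsub : {a, b} ⊆ s := by simp [Finset.insert_subset_iff, ha, hb]
  have hpair : 1 < f a + f b :=
    (hf a ha).trans_lt (lt_add_of_pos_right _ (one_pos.trans_le (hf b hb)))
  calc 2 ^ (s.card - 2) = 2 ^ (s \ {a, b}).card := by
        rw [Finset.card_sdiff_of_subset hsub, Finset.card_pair hab]
    _ ≤ ∑ i ∈ s \ {a, b}, f i + 1 :=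
        two_pow_card_le_sum_add_one_of_pairwise_doubling
          (fun i hi ↦ hf i (Finset.sdiff_subset hi)) hdouble
    _ < ∑ i ∈ s \ {a, b}, f i + (f a + f b) := by gcongr
    _ = ∑ i ∈ s, f i := by rw [← Finset.sum_pair hab, Finset.sum_sdiff hsub]

end Doubling

section PrefixAntichain

variable {α : Type*}

theorem nontrivial_of_exists_isPrefix {U : Finset (List α)} {p q : List α}
    (hp : ∃ u ∈ U, p <+: u) (hq : ∃ u ∈ U, q <+: u) (hpq : ¬ p <+: q) (hqp : ¬ q <+: p) :
    U.Nontrivial := by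
  obtain ⟨u, hu, hpu⟩ := hp
  obtain ⟨v, hv, hqv⟩ := hq
  refine ⟨u, hu, v, hv, ?_⟩
  rintro rfl
  exact (List.prefix_or_prefix_of_prefix hpu hqv).elim hpq hqp

theorem pairwiseDisjoint_filter_isPrefix [DecidableEq α] {U : Set (List α)}
    (hU : IsAntichain (· <+: ·) U) (T : Finset (List α)) :
    U.PairwiseDisjoint fun u ↦ T.filter (u <+: ·) := by
  intro u hu v hv huv
  refine Finset.disjoint_filter.2 fun t _ hut hvt ↦ ?_
  exact (List.prefix_or_prefix_of_prefix hut hvt).elim (hU hu hv huv) (hU hv hu huv.symm)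

end PrefixAntichain

theorem StreamPrefix.of_isPrefix {u v : List Bool} {x : ℕ → Bool} (huv : u <+: v)
    (hv : StreamPrefix v x) : StreamPrefix u x := fun i ↦
  (huv.getElem i.2).trans (hv ⟨i, i.2.trans_le huv.length_le⟩)

theorem streamPrefix_getD (u : List Bool) (d : Bool) : StreamPrefix u (u.getD · d) := fun i ↦
  (List.getD_eq_getElem u d i.2).symm

theorem IsTree.isAntichain_isPrefix {U : Finset (List Bool)} (hU : IsTree U) :
    IsAntichain (· <+: ·) (U : Set (List Bool)) := by
  intro u hu v hv huv hprefix
  have hvx := streamPrefix_getD v false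
  exact huv ((hU _).unique ⟨hu, hvx.of_isPrefix hprefix⟩ ⟨hv, hvx⟩)

theorem lexLt_iff_lt {u v : List Bool} : lexLt u v ↔ u < v := Iff.rfl

section TreeQuot

variable {T U : Finset (List Bool)}

theorem card_treeQuot_pos {u : List Bool} (hu : ∃ t ∈ T, u <+: t) :
    0 < (treeQuot T u).card := by
  obtain ⟨t, ht, hut⟩ := hu
  exact Finset.card_pos.2 ⟨_, Finset.mem_image_of_mem _ (Finset.mem_filter.2 ⟨ht, hut⟩)⟩

theorem sum_card_treeQuot_le (hU : IsAntichain (· <+: ·) (U : Set (List Bool))) :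
    ∑ u ∈ U, (treeQuot T u).card ≤ T.card :=
  calc ∑ u ∈ U, (treeQuot T u).card
      ≤ ∑ u ∈ U, (T.filter (u <+: ·)).card := Finset.sum_le_sum fun _ _ ↦ Finset.card_image_le
    _ = (U.biUnion fun u ↦ T.filter (u <+: ·)).card :=
        (Finset.card_biUnion (pairwiseDisjoint_filter_isPrefix hU T)).symm
    _ ≤ T.card := Finset.card_le_card (Finset.biUnion_subset.2 fun _ _ ↦ Finset.filter_subset _ _)

theorem exists_endpoints (hU : U.Nontrivial) :
    ∃ a ∈ U, ∃ b ∈ U, a ≠ b ∧ ∀ u ∈ U \ {a, b}, IsInterior U u := by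
  refine ⟨U.min' hU.nonempty, U.min'_mem _, U.max' hU.nonempty, U.max'_mem _, ?_, ?_⟩
  · exact (U.min'_lt_max'_of_card (Finset.one_lt_card_iff_nontrivial.2 hU)).ne
  · intro u hu
    simp only [Finset.mem_sdiff, Finset.mem_insert, Finset.mem_singleton, not_or] at hu
    obtain ⟨huU, hne_min, hne_max⟩ := hu
    exact ⟨huU,
      ⟨_, U.min'_mem _, lexLt_iff_lt.2 ((U.min'_le u huU).lt_of_ne' hne_min)⟩,
      ⟨_, U.max'_mem _, lexLt_iff_lt.2 ((U.le_max' u huU).lt_of_ne hne_max)⟩⟩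

theorem pairwise_isInterior_of_forall_lexLt {r : List Bool → List Bool → Prop}
    (hr : (∀ u v, IsInterior U u → IsInterior U v → lexLt u v → r u v) ∨
      (∀ u v, IsInterior U u → IsInterior U v → lexLt u v → r v u)) :
    {u | IsInterior U u}.Pairwise fun u v ↦ r u v ∨ r v u := by
  intro u hu v hv huv
  rcases huv.lt_or_gt with hlt | hlt <;> rw [← lexLt_iff_lt] at hlt <;>
    rcases hr with hinc | hdec
  · exact .inl (hinc u v hu hv hlt)
  · exact .inr (hdec u v hu hv hlt)
  · exact .inr (hinc v u hv hu hlt)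
  · exact .inl (hdec v u hv hu hlt)

theorem card_gt_of_defCond_general (hU : IsAntichain (· <+: ·) (U : Set (List Bool)))
    (hnontrivial : U.Nontrivial) (hUT : ContainedIn U T)
    (hdouble : {u | IsInterior U u}.Pairwise fun u v ↦
      2 * (treeQuot T u).card ≤ (treeQuot T v).card ∨
        2 * (treeQuot T v).card ≤ (treeQuot T u).card) :
    2 ^ (U.card - 2) < T.card := by
  obtain ⟨a, ha, b, hb, hab, hinterior⟩ := exists_endpoints hnontrivial
  calc 2 ^ (U.card - 2) < ∑ u ∈ U, (treeQuot T u).card :=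
        two_pow_card_sub_two_lt_sum (fun u hu ↦ card_treeQuot_pos (hUT u hu)) ha hb hab
          (hdouble.mono hinterior)
    _ ≤ T.card := sum_card_treeQuot_le hU

end TreeQuot

/-- If `U` satisfies the defining conditions for `∂T` and has `n` elements, then `T` has
more than `2^(n-2)` elements. In particular `|T| > 2^(|∂T|-2)`. -/
theorem card_gt_of_defCond (T U : Finset (List Bool)) (hT : IsTree T)
    (hU : DefCondDT T U) :
    2 ^ (U.card - 2) < T.card := by
  obtain ⟨hUtree, hUT, h01, h10, hdouble, -, -⟩ := hU
  exact card_gt_of_defCond_general hUtree.isAntichain_isPrefix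
    (nontrivial_of_exists_isPrefix h01 h10 (by decide) (by decide)) hUT
    (pairwise_isInterior_of_forall_lexLt hdouble)
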